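/- For every Cayley tree T labelled with [n]_0, T is an increasing tree (f_T(i) < i for all i ∈ {1,…,n}) if and only if its preference sequence π_T is a subexceedant parking function (π_T(i) ≤ i for all i ∈ {1,…,n}). Consequently, the map T ↦ π_T restricts to a bijection between the set of increasing trees labelled with [n]_0 and the set of subexceedant functions of length n. -/

import Mathlib

/-!
The whole statement rests on one observation: if `f i < i` for `1 ≤ i ≤ k`, the first `k + 1`
vertices visited by the priority-first search are `0, 1, …, k` in this order
(`wearyList_eq_range`), since `k + 1` is always available and is the smallest unvisited label.
Hence for an increasing tree the weary permutation is the identity and `π_T i = f_T i + 1`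
(`pref_eq`), which is subexceedant.

Conversely, suppose `π_T i ≤ i` for all `i`. If `f i < i` is known for `i ≤ k`, then the search
begins `0, 1, …, k`, and `π_T (k + 1) ≤ k + 1` says that `f (k + 1)` is among these vertices, so
`f (k + 1) < k + 1`. This uses that the search visits every vertex of a tree
(`mem_wearyList`), so that `wearyInv` is not a junk value: as long as some vertex is unvisited,
its path to the root contains an unvisited vertex with a visited parent (`exists_candidate`).

For the bijection, `T ↦ π_T` is `f ↦ f + 1` on increasing trees, with inverse `π ↦ π - 1`.
In a subexceedant sequence car `c` parks in spot `c` (`spotList_eq_range'`), so such a sequence is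
a parking function.
-/

open scoped Classical

namespace WearyParking

/-- `f` is the parent function of a Cayley tree on `{0,…,n}` rooted at `0`:
`f 0 = 0`, `f` is pinned to `0` outside `{1,…,n}`, `f` maps `{1,…,n}` into `{0,…,n}`,
and every vertex reaches the root under iteration. -/
def IsCayleyTree (n : ℕ) (f : ℕ → ℕ) : Prop :=
  f 0 = 0 ∧ (∀ i, n < i → f i = 0) ∧
  (∀ i, 1 ≤ i → i ≤ n → f i ≤ n) ∧
  (∀ i, 1 ≤ i → i ≤ n → ∃ k, f^[k] i = 0)

/-- A non-root vertex `i` is a record of the tree if it is greater than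
all of its ancestors. -/
def IsRecord (n : ℕ) (f : ℕ → ℕ) (i : ℕ) : Prop :=
  1 ≤ i ∧ i ≤ n ∧ ∀ k, 1 ≤ k → f^[k] i < i

/-- The smallest record larger than `i`. -/
noncomputable def nextRecord (n : ℕ) (f : ℕ → ℕ) (i : ℕ) : ℕ :=
  sInf {j | IsRecord n f j ∧ i < j}

/-- The record (blob) code of the tree, a function on `{1,…,n-1}`:
at a non-record position it records the parent, and at a record position it
records the parent of the next record. -/
noncomputable def blob (n : ℕ) (f : ℕ → ℕ) (i : ℕ) : ℕ :=
  if IsRecord n f i then f (nextRecord n f i) else f i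

/-- Number of children of vertex `v` in the tree. -/
def numChildren (n : ℕ) (f : ℕ → ℕ) (v : ℕ) : ℕ :=
  ((Finset.Icc 1 n).filter fun i => f i = v).card

/-- The list of the first `i+1` vertices visited by the priority-first search:
start at the root `0`; at each step visit the smallest unvisited vertex whose
parent has been visited. -/
noncomputable def wearyList (n : ℕ) (f : ℕ → ℕ) : ℕ → List ℕ
  | 0 => [0]
  | (i + 1) =>
      wearyList n f i ++
        [sInf {v | 1 ≤ v ∧ v ≤ n ∧ v ∉ wearyList n f i ∧ f v ∈ wearyList n f i}]

/-- The weary permutation of the tree: `weary n f i` is the `i`-th vertex visited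
by the priority-first search (with `weary n f 0 = 0`). -/
noncomputable def weary (n : ℕ) (f : ℕ → ℕ) (i : ℕ) : ℕ :=
  (wearyList n f n).getD i 0

/-- The inverse of the weary permutation. -/
noncomputable def wearyInv (n : ℕ) (f : ℕ → ℕ) (v : ℕ) : ℕ :=
  sInf {i | weary n f i = v}

/-- The preference sequence `π_T` of the tree: `π_T i = ω_T⁻¹ (f_T i) + 1`. -/
noncomputable def pref (n : ℕ) (f : ℕ → ℕ) (i : ℕ) : ℕ :=
  wearyInv n f (f i) + 1

/-- Parent function of the priority tree `pt(T)`: `ω_T⁻¹ ∘ f_T ∘ ω_T`. -/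
noncomputable def prioParent (n : ℕ) (f : ℕ → ℕ) (i : ℕ) : ℕ :=
  wearyInv n f (f (weary n f i))

/-- The list of spots occupied by cars `1,…,c` in the classical parking process:
car `c` parks at the first spot `≥ π c` not occupied by an earlier car. -/
noncomputable def spotList (π : ℕ → ℕ) : ℕ → List ℕ
  | 0 => []
  | (c + 1) => spotList π c ++ [sInf {s | π (c + 1) ≤ s ∧ s ∉ spotList π c}]

/-- The spot where car `c` ends up in the classical parking process. -/
noncomputable def spot (π : ℕ → ℕ) (c : ℕ) : ℕ :=
  (spotList π c).getD (c - 1) 0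

/-- `π` is a parking function of length `n`: preferences lie in `{1,…,n}`
(pinned to `1` outside `{1,…,n}`) and every car parks within the `n` spots. -/
def IsParkingFun (n : ℕ) (π : ℕ → ℕ) : Prop :=
  (∀ c, 1 ≤ c → c ≤ n → 1 ≤ π c ∧ π c ≤ n) ∧
  (∀ c, c = 0 ∨ n < c → π c = 1) ∧
  (∀ c, 1 ≤ c → c ≤ n → spot π c ≤ n)

/-- The bird's-eye permutation `ω_π`: the car parked at spot `i` (and `0` at `0`). -/
noncomputable def birdsEye (n : ℕ) (π : ℕ → ℕ) (i : ℕ) : ℕ :=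
  if i = 0 then 0 else sInf {c | 1 ≤ c ∧ c ≤ n ∧ spot π c = i}

/-- The inverse of the bird's-eye permutation. -/
noncomputable def birdsEyeInv (n : ℕ) (π : ℕ → ℕ) (c : ℕ) : ℕ :=
  sInf {i | birdsEye n π i = c}

/-- Parent function of the parking tree `PT(π)`: `f_π i = ω_π (π i - 1)`. -/
noncomputable def ptParent (n : ℕ) (π : ℕ → ℕ) (i : ℕ) : ℕ :=
  if 1 ≤ i ∧ i ≤ n then birdsEye n π (π i - 1) else 0

/-- `v` is a record of the parking function `π`, i.e. a left-to-right maximum of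
the word `ω_π(1) ω_π(2) ⋯ ω_π(n)`. -/
def IsPfRecord (n : ℕ) (π : ℕ → ℕ) (v : ℕ) : Prop :=
  ∃ i, 1 ≤ i ∧ i ≤ n ∧ birdsEye n π i = v ∧ ∀ j, 1 ≤ j → j < i → birdsEye n π j < v

/-- The waiting time of the tree: `wait T = Σ_{i=1}^n (i - f_{pt(T)}(i))`. -/
noncomputable def wait (n : ℕ) (f : ℕ → ℕ) : ℕ :=
  ∑ i ∈ Finset.Icc 1 n, (i - prioParent n f i)

/-- The number of priority small ascents of the tree. -/
noncomputable def psa (n : ℕ) (f : ℕ → ℕ) : ℕ :=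
  ((Finset.Icc 1 n).filter fun i => prioParent n f i = i - 1).card

/-- The number of children of the root. -/
def degRoot (n : ℕ) (f : ℕ → ℕ) : ℕ := numChildren n f 0

/-- The children sequence: `chseq n f j` is the number of vertices with exactly
`j` children. -/
def chseq (n : ℕ) (f : ℕ → ℕ) (j : ℕ) : ℕ :=
  ((Finset.Icc 0 n).filter fun v => numChildren n f v = j).card

/-- The number of probes of the parking function: `n` plus the total displacement. -/
noncomputable def probes (n : ℕ) (π : ℕ → ℕ) : ℕ :=
  n + ∑ c ∈ Finset.Icc 1 n, (spot π c - π c)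

/-- The number of lucky cars of `π`: cars parking at their preferred spot. -/
noncomputable def lucky (n : ℕ) (π : ℕ → ℕ) : ℕ :=
  ((Finset.Icc 1 n).filter fun c => spot π c = π c).card

/-- The number of `1`s in `π`. -/
def ones (n : ℕ) (π : ℕ → ℕ) : ℕ :=
  ((Finset.Icc 1 n).filter fun c => π c = 1).card

/-- The multiplicity of the value `v` in the parking function `π`. -/
def multIn (n : ℕ) (π : ℕ → ℕ) (v : ℕ) : ℕ :=
  ((Finset.Icc 1 n).filter fun c => π c = v).card

/-- The multiplicity sequence: `multSeq n π j` is the number of values in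
`{1,…,n+1}` appearing exactly `j` times in `π`. -/
def multSeq (n : ℕ) (π : ℕ → ℕ) (j : ℕ) : ℕ :=
  ((Finset.Icc 1 (n + 1)).filter fun v => multIn n π v = j).card

/-- The tree is a path graph with endpoints `0` and `n`: every vertex has at most
one child and `n` is the (unique) leaf. -/
def IsPathTree (n : ℕ) (f : ℕ → ℕ) : Prop :=
  (∀ v, v ≤ n → numChildren n f v ≤ 1) ∧ numChildren n f n = 0

/-- `g` is the parent map of a rooted forest on `{1,…,n}` rooted at `{1,…,k}`:
the vertices `1,…,k` are roots (fixed points), every other vertex of `{1,…,n}` has a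
parent in `{1,…,n}`, every vertex reaches one of the roots under iteration, and `g`
is pinned to `0` outside `{1,…,n}`. -/
def IsForestRootedAt (n k : ℕ) (g : ℕ → ℕ) : Prop :=
  (∀ i, 1 ≤ i → i ≤ k → g i = i) ∧
  (∀ i, k < i → i ≤ n → 1 ≤ g i ∧ g i ≤ n) ∧
  (∀ i, 1 ≤ i → i ≤ n → ∃ m, 1 ≤ g^[m] i ∧ g^[m] i ≤ k) ∧
  (∀ i, i = 0 ∨ n < i → g i = 0)

/-! ### The priority-first search -/

lemma length_wearyList (n : ℕ) (f : ℕ → ℕ) (k : ℕ) : (wearyList n f k).length = k + 1 := by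
  induction k with
  | zero => simp [wearyList]
  | succ k ih => simp [wearyList, ih]

lemma wearyList_prefix (n : ℕ) (f : ℕ → ℕ) {k m : ℕ} (h : k ≤ m) :
    wearyList n f k <+: wearyList n f m := by
  induction m, h using Nat.le_induction with
  | base => exact List.prefix_rfl
  | succ m _ ih => exact ih.trans (by rw [wearyList]; exact List.prefix_append _ _)

lemma zero_mem_wearyList (n : ℕ) (f : ℕ → ℕ) (k : ℕ) : 0 ∈ wearyList n f k :=
  (wearyList_prefix n f (Nat.zero_le k)).subset (by simp [wearyList])

/-- The vertices at positions up to `k` already occur in the first `k + 1` visited vertices. -/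
lemma weary_mem (n : ℕ) (f : ℕ → ℕ) {j k : ℕ} (hj : j ≤ k) (hk : k ≤ n) :
    weary n f j ∈ wearyList n f k := by
  have hl : j < (wearyList n f k).length := by rw [length_wearyList]; omega
  have hl' : j < (wearyList n f n).length := by rw [length_wearyList]; omega
  have : weary n f j = (wearyList n f k)[j] := by
    rw [weary, List.getD_eq_getElem _ _ hl']
    exact ((wearyList_prefix n f hk).getElem hl).symm
  rw [this]
  exact List.getElem_mem hl

/-- On the path from an unvisited vertex to the visited root there is an unvisited vertex whose
parent is visited, so the search never gets stuck. -/
lemma exists_candidate {n : ℕ} {f : ℕ → ℕ} (hf : IsCayleyTree n f) {L : List ℕ} (h0 : 0 ∈ L)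
    {v : ℕ} (hv : v ≤ n) (hvL : v ∉ L) : ∃ w, 1 ≤ w ∧ w ≤ n ∧ w ∉ L ∧ f w ∈ L := by
  by_contra! hc
  have pos : ∀ w, w ∉ L → 1 ≤ w := fun w hw =>
    Nat.one_le_iff_ne_zero.mpr fun h => hw (h ▸ h0)
  have key : ∀ k, f^[k] v ≤ n ∧ f^[k] v ∉ L := by
    intro k
    induction k with
    | zero => exact ⟨hv, hvL⟩
    | succ k ih =>
      rw [Function.iterate_succ_apply']
      exact ⟨hf.2.2.1 _ (pos _ ih.2) ih.1, hc _ (pos _ ih.2) ih.1 ih.2⟩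
  obtain ⟨k, hk⟩ := hf.2.2.2 v (pos v hvL) hv
  exact (key k).2 (hk ▸ h0)

lemma wearyList_nodup {n : ℕ} {f : ℕ → ℕ} (hf : IsCayleyTree n f) {k : ℕ} (hk : k ≤ n) :
    (wearyList n f k).Nodup ∧ ∀ v ∈ wearyList n f k, v ≤ n := by
  induction k with
  | zero => simp [wearyList]
  | succ k ih =>
    obtain ⟨hnd, hle⟩ := ih (by omega)
    -- `k + 1 ≤ n` vertices have been visited, so one of the `n + 1` vertices is missing.
    have hex : ∃ v, v ≤ n ∧ v ∉ wearyList n f k := by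
      by_contra! hc
      have h1 : Finset.range (n + 1) ⊆ (wearyList n f k).toFinset := fun v hv =>
        List.mem_toFinset.mpr (hc v (by simpa [Nat.lt_succ_iff] using hv))
      have h2 := (Finset.card_le_card h1).trans (List.toFinset_card_le _)
      rw [Finset.card_range, length_wearyList] at h2
      omega
    obtain ⟨v, hv, hvL⟩ := hex
    have hmem := Nat.sInf_mem (s := {v | 1 ≤ v ∧ v ≤ n ∧ v ∉ wearyList n f k ∧
      f v ∈ wearyList n f k}) (exists_candidate hf (zero_mem_wearyList n f k) hv hvL)
    rw [wearyList]
    constructor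
    · exact hnd.append (List.nodup_singleton _)
        (List.disjoint_singleton.mpr hmem.2.2.1)
    · intro w hw
      rcases List.mem_append.mp hw with h | h
      · exact hle w h
      · rw [List.mem_singleton.mp h]
        exact hmem.2.1

/-- The search visits every vertex of a tree. -/
lemma mem_wearyList {n : ℕ} {f : ℕ → ℕ} (hf : IsCayleyTree n f) {v : ℕ} (hv : v ≤ n) :
    v ∈ wearyList n f n := by
  obtain ⟨hnd, hle⟩ := wearyList_nodup hf le_rfl
  have hsub : (wearyList n f n).toFinset ⊆ Finset.range (n + 1) := fun w hw =>
    Finset.mem_range.mpr (Nat.lt_succ_of_le (hle w (List.mem_toFinset.mp hw)))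
  have heq := Finset.eq_of_subset_of_card_le hsub (by
    rw [List.toFinset_card_of_nodup hnd, length_wearyList, Finset.card_range])
  rw [← List.mem_toFinset, heq, Finset.mem_range]
  omega

lemma weary_wearyInv {n : ℕ} {f : ℕ → ℕ} (hf : IsCayleyTree n f) {v : ℕ} (hv : v ≤ n) :
    weary n f (wearyInv n f v) = v := by
  obtain ⟨i, hi, hiv⟩ := List.getElem_of_mem (mem_wearyList hf hv)
  have : {i | weary n f i = v}.Nonempty :=
    ⟨i, by rw [Set.mem_ofPred_eq, weary, List.getD_eq_getElem _ _ hi, hiv]⟩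
  exact Nat.sInf_mem this

/-! ### Increasing trees -/

/-- If `f` is increasing up to `k`, the search starts with `0, 1, …, k` in this order. -/
lemma wearyList_eq_range {n : ℕ} {f : ℕ → ℕ} {k : ℕ} (hk : k ≤ n)
    (h : ∀ i, 1 ≤ i → i ≤ k → f i < i) : wearyList n f k = List.range (k + 1) := by
  induction k with
  | zero => simp [wearyList]
  | succ k ih =>
    rw [wearyList, ih (by omega) fun i h1 h2 => h i h1 (by omega), List.range_succ (n := k + 1)]
    congr 2
    have hlt := h (k + 1) (by omega) le_rfl
    have hmem : k + 1 ∈ {v | 1 ≤ v ∧ v ≤ n ∧ v ∉ List.range (k + 1) ∧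
        f v ∈ List.range (k + 1)} := by
      simp only [Set.mem_ofPred_eq, List.mem_range]
      omega
    refine le_antisymm (Nat.sInf_le hmem) (le_csInf ⟨_, hmem⟩ ?_)
    rintro v ⟨-, -, hv, -⟩
    simpa using hv

lemma wearyInv_eq {n : ℕ} {f : ℕ → ℕ} (h : ∀ i, 1 ≤ i → i ≤ n → f i < i) {v : ℕ} (hv : v ≤ n) :
    wearyInv n f v = v := by
  have hw : ∀ i, i ≤ n → weary n f i = i := fun i hi => by
    rw [weary, wearyList_eq_range le_rfl h, List.getD_eq_getElem _ _ (by simp; omega)]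
    simp
  have hmem : v ∈ {i | weary n f i = v} := hw v hv
  refine le_antisymm (Nat.sInf_le hmem) (le_csInf ⟨_, hmem⟩ fun i hi => ?_)
  rcases le_or_gt i n with hin | hin
  · exact ((hw i hin).symm.trans hi).ge
  · omega

/-- On increasing trees the preference sequence is the parent function shifted by one. -/
lemma pref_eq {n : ℕ} {f : ℕ → ℕ} (hf : IsCayleyTree n f)
    (h : ∀ i, 1 ≤ i → i ≤ n → f i < i) : pref n f = fun i => f i + 1 := by
  funext i
  have hi : f i ≤ n := by
    rcases Nat.eq_zero_or_pos i with h0 | h0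
    · rw [h0, hf.1]; exact Nat.zero_le n
    · rcases le_or_gt i n with hin | hin
      · exact hf.2.2.1 i h0 hin
      · rw [hf.2.1 i hin]; exact Nat.zero_le n
  rw [pref, wearyInv_eq h hi]

lemma increasing_of_pref_le {n : ℕ} {f : ℕ → ℕ} (hf : IsCayleyTree n f)
    (h : ∀ i, 1 ≤ i → i ≤ n → pref n f i ≤ i) : ∀ i, 1 ≤ i → i ≤ n → f i < i := by
  intro i
  induction i using Nat.strong_induction_on with
  | _ i ih =>
    intro h1 hn
    have hmem := weary_mem n f (j := wearyInv n f (f i)) (k := i - 1)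
      (by have := h i h1 hn; rw [pref] at this; omega) (by omega)
    rw [weary_wearyInv hf (hf.2.2.1 i h1 hn),
      wearyList_eq_range (by omega) fun j hj1 hj2 => ih j (by omega) hj1 (by omega),
      List.mem_range] at hmem
    omega

/-- A function that decreases on `{1, …, n}` and is `0` elsewhere reaches the root from
everywhere. -/
lemma isCayleyTree_of_lt {n : ℕ} {f : ℕ → ℕ} (h0 : f 0 = 0) (hout : ∀ i, n < i → f i = 0)
    (h : ∀ i, 1 ≤ i → i ≤ n → f i < i) : IsCayleyTree n f := by
  refine ⟨h0, hout, fun i h1 hn => (h i h1 hn).le.trans hn, fun i => ?_⟩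
  induction i using Nat.strong_induction_on with
  | _ i ih =>
    intro h1 hn
    have hlt := h i h1 hn
    rcases Nat.eq_zero_or_pos (f i) with hz | hz
    · exact ⟨1, hz⟩
    · obtain ⟨k, hk⟩ := ih (f i) hlt hz (by omega)
      exact ⟨k + 1, hk⟩

/-! ### Subexceedant sequences -/

/-- In a subexceedant sequence the first `c` cars occupy the spots `1, …, c` in this order. -/
lemma spotList_eq_range' {n : ℕ} {π : ℕ → ℕ} (h1 : ∀ i, 1 ≤ i → i ≤ n → 1 ≤ π i)
    (h : ∀ i, 1 ≤ i → i ≤ n → π i ≤ i) {c : ℕ} (hc : c ≤ n) :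
    spotList π c = List.range' 1 c := by
  induction c with
  | zero => simp [spotList]
  | succ c ih =>
    rw [spotList, ih (by omega), List.range'_concat]
    congr 2
    have hp := h1 (c + 1) (by omega) hc
    have hmem : c + 1 ∈ {s | π (c + 1) ≤ s ∧ s ∉ List.range' 1 c} := by
      refine ⟨h (c + 1) (by omega) hc, ?_⟩
      simp only [List.mem_range'_1]
      omega
    rw [one_mul, add_comm 1 c]
    refine le_antisymm (Nat.sInf_le hmem) (le_csInf ⟨_, hmem⟩ ?_)
    rintro s ⟨hs, hs'⟩
    simp only [List.mem_range'_1] at hs'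
    omega

lemma spot_le {n : ℕ} {π : ℕ → ℕ} (h1 : ∀ i, 1 ≤ i → i ≤ n → 1 ≤ π i)
    (h : ∀ i, 1 ≤ i → i ≤ n → π i ≤ i) {c : ℕ} (hc1 : 1 ≤ c) (hc : c ≤ n) : spot π c ≤ n := by
  rw [spot, spotList_eq_range' h1 h hc, List.getD_eq_getElem _ _ (by simp; omega)]
  simp
  omega

/-- A Cayley tree is increasing iff its preference sequence is
subexceedant; hence `T ↦ π_T` restricts to a bijection between increasing trees
labelled with `[n]₀` and subexceedant functions of length `n`. -/
theorem stmt18 (n : ℕ) :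
    (∀ f : ℕ → ℕ, IsCayleyTree n f →
      ((∀ i, 1 ≤ i → i ≤ n → f i < i) ↔ (∀ i, 1 ≤ i → i ≤ n → pref n f i ≤ i))) ∧
    Set.BijOn (fun f => pref n f)
      {f : ℕ → ℕ | IsCayleyTree n f ∧ ∀ i, 1 ≤ i → i ≤ n → f i < i}
      {π : ℕ → ℕ | IsParkingFun n π ∧ ∀ i, 1 ≤ i → i ≤ n → π i ≤ i} := by
  refine ⟨fun f hf => ⟨fun h i h1 hn => ?_, increasing_of_pref_le hf⟩, ?_, ?_, ?_⟩
  · rw [pref_eq hf h]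
    exact h i h1 hn
  · rintro f ⟨hf, h⟩
    simp only [pref_eq hf h, Set.mem_ofPred_eq]
    refine ⟨⟨fun c h1 hn => ?_, ?_, fun c h1 hn => ?_⟩, h⟩
    · have := h c h1 hn
      beta_reduce
      omega
    · rintro c (rfl | hc)
      · simp [hf.1]
      · simp [hf.2.1 c hc]
    · exact spot_le (fun i _ _ => Nat.le_add_left 1 (f i)) h h1 hn
  · rintro f ⟨hf, h⟩ g ⟨hg, h'⟩ heq
    simp only [pref_eq hf h, pref_eq hg h'] at heq
    funext i
    exact Nat.succ_injective (congrFun heq i)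
  · rintro π ⟨⟨hr, hout, -⟩, h⟩
    have hpos : ∀ i, 1 ≤ π i := by
      intro i
      by_cases hi : i = 0 ∨ n < i
      · exact (hout i hi).ge
      · exact (hr i (by omega) (by omega)).1
    have hlt : ∀ i, 1 ≤ i → i ≤ n → π i - 1 < i := by
      intro i h1 hn
      have := h i h1 hn
      omega
    have hf : IsCayleyTree n (fun i => π i - 1) :=
      isCayleyTree_of_lt (by simp [hout 0 (Or.inl rfl)])
        (fun i hi => by simp [hout i (Or.inr hi)]) hlt
    refine ⟨fun i => π i - 1, ⟨hf, hlt⟩, ?_⟩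
    simp only [pref_eq hf hlt]
    funext i
    exact Nat.sub_add_cancel (hpos i)

end WearyParking
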